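/- Let D ⊂ ℝ^d be a bounded measurable set such that the one-sided derivative γ̄_D′⁺(0) exists and is finite, ρ^{d+1} γ̄̂_D(ρ) is bounded measurable on (0,∞), and lim_{ρ→∞} ρ^{d+1} γ̄̂_D(ρ) exists. Then lim_{ρ→∞} 2π² κ_{d−1} ρ^{d+1} γ̄̂_D(ρ) = −γ̄_D′⁺(0). -/

import Mathlib

open MeasureTheory Metric Set Real Complex Filter
open scoped FourierTransform RealInnerProductSpace Pointwise ENNReal Topology

noncomputable section

/-- The Euclidean space `ℝ^d`. -/
abbrev E (d : ℕ) := EuclideanSpace ℝ (Fin d)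

/-- View a plain vector `Fin d → ℝ` as a point of Euclidean space. -/
def toE {d : ℕ} (v : Fin d → ℝ) : E d := (EuclideanSpace.equiv (Fin d) ℝ).symm v

/-- The point lattice `T = A ℤ^d`. -/
def latticeSet (d : ℕ) (A : Matrix (Fin d) (Fin d) ℝ) : Set (E d) :=
  {p | ∃ n : Fin d → ℤ, p = toE (A.mulVec fun i => (n i : ℝ))}

/-- The fundamental region `F_T = A [0,1)^d`. -/
def fundRegion (d : ℕ) (A : Matrix (Fin d) (Fin d) ℝ) : Set (E d) :=
  (fun y => toE (A.mulVec y)) '' (Set.pi Set.univ fun _ : Fin d => Set.Ico (0 : ℝ) 1)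

/-- Number of lattice points in the translate `D + x`. -/
def latticeCount (d : ℕ) (A : Matrix (Fin d) (Fin d) ℝ) (D : Set (E d)) (x : E d) : ℕ :=
  (((fun y => y + x) '' D) ∩ latticeSet d A).ncard

/-- The dual lattice `T* = {ξ | ξ·p ∈ ℤ for all p ∈ T}`. -/
def dualLattice (d : ℕ) (A : Matrix (Fin d) (Fin d) ℝ) : Set (E d) :=
  {ξ | ∀ p ∈ latticeSet d A, ∃ k : ℤ, ⟪ξ, p⟫ = (k : ℝ)}

/-- The (complex-valued) indicator function of a set. -/
def indC {d : ℕ} (D : Set (E d)) : E d → ℂ := D.indicator 1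

/-- The covariogram `γ_D(x) = ∫ I_D(y) I_D(y - x) dy`. -/
def covariogram {d : ℕ} (D : Set (E d)) (x : E d) : ℝ :=
  ∫ y, (D.indicator (1 : E d → ℝ) y) * (D.indicator (1 : E d → ℝ) (y - x))

/-- The normalized (probability) surface measure on the unit sphere `S^{d-1}`. -/
def sphereProb (d : ℕ) : Measure (sphere (0 : E d) 1) :=
  ((volume : Measure (E d)).toSphere Set.univ)⁻¹ • (volume : Measure (E d)).toSphere

/-- Rotational quadratic average of the modulus of the Fourier transform of `I_D`:
`γ̄̂_D(ρ) = ∫_{S^{d-1}} |Î_D(ρ ξ)|² dσ(ξ)`. -/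
def avgFT {d : ℕ} (D : Set (E d)) (ρ : ℝ) : ℝ :=
  ∫ ξ : sphere (0 : E d) 1, ‖𝓕 (indC D) (ρ • (ξ : E d))‖ ^ 2 ∂(sphereProb d)

/-- The isotropic covariogram, via its (equivalent) definition as the spherical average
`γ̄_D(u) = ∫_{S^{d-1}} γ_D(u ξ) dσ(ξ)`. -/
def isoCov {d : ℕ} (D : Set (E d)) (u : ℝ) : ℝ :=
  ∫ ξ : sphere (0 : E d) 1, covariogram D (u • (ξ : E d)) ∂(sphereProb d)

/-- Bessel function of the first kind (power series definition, real order). -/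
def besselJ (ν : ℝ) (z : ℝ) : ℝ :=
  ∑' k : ℕ, (-1 : ℝ) ^ k * (z / 2) ^ (ν + 2 * k) / (Nat.factorial k * Real.Gamma (ν + k + 1))

/-- `κ_d`, the volume of the unit ball in `ℝ^d`. -/
def unitBallVol (d : ℕ) : ℝ := Real.pi ^ ((d : ℝ) / 2) / Real.Gamma ((d : ℝ) / 2 + 1)

/-- The image of a set `D` under the rotation given by a matrix `M`. -/
def rotSet {d : ℕ} (M : Matrix (Fin d) (Fin d) ℝ) (D : Set (E d)) : Set (E d) :=
  (fun y => toE (M.mulVec (EuclideanSpace.equiv (Fin d) ℝ y))) '' D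

/-- The special orthogonal group `SO(d)`, as a set of matrices. -/
def SOSet (d : ℕ) : Set (Matrix (Fin d) (Fin d) ℝ) :=
  {M | M ∈ Matrix.specialOrthogonalGroup (Fin d) ℝ}

/-- Borel measurable structure on the space of `d × d` real matrices. -/
instance matrixMeasurableSpace {d : ℕ} : MeasurableSpace (Matrix (Fin d) (Fin d) ℝ) :=
  borel _

instance matrixBorelSpace {d : ℕ} : BorelSpace (Matrix (Fin d) (Fin d) ℝ) := ⟨rfl⟩

theorem aux_int_ind {d : ℕ} (D : Set (E d)) (hDmeas : MeasurableSet D)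
    (hDbdd : Bornology.IsBounded D) : Integrable (indC D) := by
  unfold indC
  exact (integrable_indicator_iff hDmeas).2 (integrableOn_const (hs := hDbdd.measure_lt_top.ne))

theorem aux_conv {d : ℕ} (D : Set (E d)) :
    MeasureTheory.convolution (indC D) (fun z => indC D (-z)) (ContinuousLinearMap.mul ℂ ℂ) volume
      = fun x => ((covariogram D x : ℝ) : ℂ) := by
  funext x
  simp only [convolution_def, ContinuousLinearMap.mul_apply', covariogram]
  rw [← integral_complex_ofReal]
  congr 1
  funext y
  have h : -(x - y) = y - x := neg_sub x y
  rw [h]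
  simp only [indC, Set.indicator]
  split_ifs <;> simp

theorem aux_int_cov {d : ℕ} (D : Set (E d)) (hDmeas : MeasurableSet D)
    (hDbdd : Bornology.IsBounded D) : Integrable (fun x => ((covariogram D x : ℝ) : ℂ)) := by
  rw [← aux_conv]
  exact (aux_int_ind D hDmeas hDbdd).integrable_convolution _ (aux_int_ind D hDmeas hDbdd).comp_neg

theorem aux_four_neg {d : ℕ} (D : Set (E d)) (ξ : E d) :
    𝓕 (fun z => indC D (-z)) ξ = (starRingEnd ℂ) (𝓕 (indC D) ξ) := by
  rw [Real.fourier_eq', Real.fourier_eq', ← integral_conj, ← integral_neg_eq_self]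
  congr 1
  funext v
  have h : (starRingEnd ℂ) (indC D v) = indC D v := by
    simp only [indC, Set.indicator]; split_ifs <;> simp
  simp only [smul_eq_mul, map_mul, neg_neg, h, ← Complex.exp_conj]
  congr 2
  have h2 : (starRingEnd ℂ) 2 = 2 := Complex.conj_ofNat 2
  simp [h2]

theorem aux_four_cov {d : ℕ} (D : Set (E d)) (hDmeas : MeasurableSet D)
    (hDbdd : Bornology.IsBounded D) (ξ : E d) :
    𝓕 (fun x => ((covariogram D x : ℝ) : ℂ)) ξ = ((‖𝓕 (indC D) ξ‖ ^ 2 : ℝ) : ℂ) := by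
  rw [← aux_conv, Real.fourier_mul_convolution_eq (aux_int_ind D hDmeas hDbdd)
    (aux_int_ind D hDmeas hDbdd).comp_neg, aux_four_neg, Complex.mul_conj, Complex.normSq_eq_norm_sq]

theorem aux_pair {d : ℕ} (D : Set (E d)) (hDmeas : MeasurableSet D)
    (hDbdd : Bornology.IsBounded D) (ε : ℝ) (hε : 0 < ε) :
    ∫ ξ : E d, Real.exp (-(Real.pi * ε ^ 2 * ‖ξ‖ ^ 2)) * ‖𝓕 (indC D) ξ‖ ^ 2
      = ∫ x : E d, (ε⁻¹) ^ d * Real.exp (-(Real.pi * (ε⁻¹) ^ 2 * ‖x‖ ^ 2)) * covariogram D x := by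
  have hb : 0 < ((Real.pi * ε ^ 2 : ℝ) : ℂ).re := by
    rw [Complex.ofReal_re]; positivity
  have hg : Integrable (fun v : E d => cexp (-((Real.pi * ε ^ 2 : ℝ) : ℂ) * ‖v‖ ^ 2)) := by
    simpa using GaussianFourier.integrable_cexp_neg_mul_sq_norm_add hb 0 (0 : E d)
  have key := VectorFourier.integral_fourierIntegral_smul_eq_flip (L := innerₗ (E d))
    Real.continuous_fourierChar continuous_inner (aux_int_cov D hDmeas hDbdd) hg (μ := volume)
    (ν := volume)
  rw [flip_innerₗ] at key
  have e1 : ∀ ξ, VectorFourier.fourierIntegral Real.fourierChar volume (innerₗ (E d))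
      (fun x => ((covariogram D x : ℝ) : ℂ)) ξ = ((‖𝓕 (indC D) ξ‖ ^ 2 : ℝ) : ℂ) :=
    fun ξ => aux_four_cov D hDmeas hDbdd ξ
  have e2 : ∀ x, VectorFourier.fourierIntegral Real.fourierChar volume (innerₗ (E d))
      (fun v : E d => cexp (-((Real.pi * ε ^ 2 : ℝ) : ℂ) * ‖v‖ ^ 2)) x =
      (((ε⁻¹) ^ d * Real.exp (-(Real.pi * (ε⁻¹) ^ 2 * ‖x‖ ^ 2)) : ℝ) : ℂ) := by
    intro x
    refine (fourier_gaussian_innerProductSpace hb x).trans ?_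
    have h1 : ((Real.pi : ℂ) / ((Real.pi * ε ^ 2 : ℝ) : ℂ)) = (((ε⁻¹) ^ 2 : ℝ) : ℂ) := by
      rw [← Complex.ofReal_div]
      congr 1
      have := Real.pi_pos
      field_simp
    rw [h1, finrank_euclideanSpace_fin, Complex.ofReal_mul (ε⁻¹ ^ d)]
    congr 1
    · have : ((d : ℂ) / 2) = (((d : ℝ) / 2 : ℝ) : ℂ) := by push_cast; rfl
      rw [this, ← Complex.ofReal_cpow (by positivity)]
      congr 1
      rw [← Real.rpow_natCast, ← Real.rpow_mul (by positivity), ← Real.rpow_natCast]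
      congr 1
      push_cast
      ring
    · rw [Complex.ofReal_exp]
      congr 1
      have := Real.pi_pos
      have h2 : -(Real.pi : ℂ) ^ 2 * (‖x‖ : ℂ) ^ 2 / ((Real.pi * ε ^ 2 : ℝ) : ℂ)
        = ((-Real.pi ^ 2 * ‖x‖ ^ 2 / (Real.pi * ε ^ 2) : ℝ) : ℂ) := by push_cast; rfl
      rw [h2]
      congr 1
      field_simp
  simp only [e1, e2, smul_eq_mul] at key
  apply Complex.ofReal_injective
  rw [← integral_complex_ofReal, ← integral_complex_ofReal]
  refine Eq.trans ?_ (key.trans ?_)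
  · congr 1
    funext ξ
    push_cast
    rw [mul_comm, neg_mul]
  · congr 1
    funext ξ
    push_cast
    ring
theorem aux_polar {d : ℕ} (hd : 1 ≤ d) (f : E d → ℝ) (hf : Integrable f) :
    ∫ x, f x = ((volume : Measure (E d)).toSphere Set.univ).toReal *
      ∫ r in Ioi (0:ℝ), r ^ (d - 1) * ∫ ξ : sphere (0 : E d) 1, f (r • (ξ : E d)) ∂(sphereProb d) := by
  have : Nonempty (Fin d) := ⟨⟨0, hd⟩⟩
  have : Nontrivial (E d) := inferInstance
  set μ : Measure (E d) := volume with hμ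
  have hmp := μ.measurePreserving_homeomorphUnitSphereProd
  have h0 : μ.toSphere Set.univ ≠ 0 := by
    rw [Ne, Measure.measure_univ_eq_zero]; exact μ.toSphere_ne_zero
  have hS : (μ.toSphere Set.univ).toReal ≠ 0 := by
    rw [ENNReal.toReal_ne_zero]
    exact ⟨h0, measure_ne_top _ _⟩
  let G : sphere (0 : E d) 1 × Ioi (0:ℝ) → ℝ := fun p => f ((p.2 : ℝ) • (p.1 : E d))
  have hG : ∀ x : ({(0)}ᶜ : Set (E d)), G (homeomorphUnitSphereProd (E d) x) = f x := by
    intro x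
    have hx : ‖(x : E d)‖ ≠ 0 := norm_ne_zero_iff.2 x.2
    simp only [G, homeomorphUnitSphereProd_apply_snd_coe, homeomorphUnitSphereProd_apply_fst_coe,
      smul_smul, mul_inv_cancel₀ hx, one_smul]
  have hGint : Integrable G (μ.toSphere.prod (.volumeIoiPow (Module.finrank ℝ (E d) - 1))) := by
    rw [← hmp.integrable_comp_emb (Homeomorph.measurableEmbedding _)]
    have : G ∘ (homeomorphUnitSphereProd (E d)) = f ∘ Subtype.val := funext hG
    rw [this, ← integrableOn_iff_comap_subtypeVal (measurableSet_singleton _).compl]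
    exact hf.integrableOn
  calc
    ∫ x, f x ∂μ = ∫ x : ({(0)}ᶜ : Set (E d)), f x ∂(μ.comap (↑)) := by
      rw [integral_subtype_comap (measurableSet_singleton _).compl f,
        restrict_compl_singleton]
    _ = ∫ p, G p ∂μ.toSphere.prod (.volumeIoiPow (Module.finrank ℝ (E d) - 1)) := by
      rw [← hmp.integral_comp (Homeomorph.measurableEmbedding _)]
      simp only [hG]
    _ = ∫ r, ∫ ξ, G (ξ, r) ∂μ.toSphere ∂(.volumeIoiPow (Module.finrank ℝ (E d) - 1)) :=
      integral_prod_symm _ hGint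
    _ = ∫ r in Ioi (0:ℝ), r ^ (d - 1) * ∫ ξ : sphere (0 : E d) 1, f (r • (ξ : E d)) ∂μ.toSphere := by
      simp only [Measure.volumeIoiPow, ENNReal.ofReal, G]
      rw [integral_withDensity_eq_integral_smul,
        integral_subtype_comap measurableSet_Ioi fun a : ℝ ↦ Real.toNNReal (a ^ (Module.finrank ℝ (E d) - 1)) •
          ∫ ξ : sphere (0 : E d) 1, f (a • (ξ : E d)) ∂μ.toSphere,
        setIntegral_congr_fun measurableSet_Ioi fun x hx ↦ ?_]
      · rw [NNReal.smul_def, Real.coe_toNNReal _ (pow_nonneg hx.out.le _), finrank_euclideanSpace_fin]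
        rfl
      · exact (measurable_subtype_coe.pow_const _).real_toNNReal
    _ = _ := by
      rw [← integral_const_mul]
      congr 1
      funext r
      simp only [sphereProb, integral_smul_measure, ENNReal.toReal_inv, smul_eq_mul]
      rw [← hμ]
      field_simp
theorem aux_prob {d : ℕ} (hd : 1 ≤ d) : IsProbabilityMeasure (sphereProb d) := by
  have : Nonempty (Fin d) := ⟨⟨0, hd⟩⟩
  have : Nontrivial (E d) := inferInstance
  constructor
  have h0 : (volume : Measure (E d)).toSphere Set.univ ≠ 0 := by
    rw [Ne, Measure.measure_univ_eq_zero]; exact Measure.toSphere_ne_zero _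
  rw [sphereProb, Measure.smul_apply, smul_eq_mul]
  exact ENNReal.inv_mul_cancel h0 (measure_ne_top _ _)

theorem aux_cov_meas {d : ℕ} (D : Set (E d)) (hDmeas : MeasurableSet D) :
    StronglyMeasurable (covariogram D) := by
  have h : StronglyMeasurable (fun p : E d × E d =>
      (D.indicator (1 : E d → ℝ) p.2) * (D.indicator (1 : E d → ℝ) (p.2 - p.1))) := by
    have hi : Measurable (D.indicator (1 : E d → ℝ)) := measurable_one.indicator hDmeas
    exact ((hi.comp measurable_snd).mul
      (hi.comp (measurable_snd.sub measurable_fst))).stronglyMeasurable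
  exact h.integral_prod_right

theorem aux_cov_bdd {d : ℕ} (D : Set (E d)) (hDmeas : MeasurableSet D)
    (hDbdd : Bornology.IsBounded D) (x : E d) : ‖covariogram D x‖ ≤ volume.real D := by
  have hI : Integrable (D.indicator (1 : E d → ℝ)) :=
    (integrable_indicator_iff hDmeas).2 (integrableOn_const (hs := hDbdd.measure_lt_top.ne))
  have h2 : ∫ y, D.indicator (1 : E d → ℝ) y = volume.real D := integral_indicator_one hDmeas
  rw [← h2]
  refine norm_integral_le_of_norm_le hI (Eventually.of_forall fun y => ?_)
  simp only [Set.indicator]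
  split_ifs <;> simp

theorem aux_four_bdd {d : ℕ} (D : Set (E d)) (ξ : E d) :
    ‖𝓕 (indC D) ξ‖ ≤ ∫ x, ‖indC D x‖ := 
  VectorFourier.norm_fourierIntegral_le_integral_norm _ _ _ _ _

theorem aux_four_cont {d : ℕ} (D : Set (E d)) (hDmeas : MeasurableSet D)
    (hDbdd : Bornology.IsBounded D) : Continuous (𝓕 (indC D)) :=
  VectorFourier.fourierIntegral_continuous Real.continuous_fourierChar
    (L := innerₗ (E d)) continuous_inner (aux_int_ind D hDmeas hDbdd)

theorem aux_iso_meas {d : ℕ} (hd : 1 ≤ d) (D : Set (E d)) (hDmeas : MeasurableSet D) :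
    StronglyMeasurable (isoCov D) := by
  have := aux_prob hd
  have h : StronglyMeasurable (fun p : ℝ × sphere (0 : E d) 1 =>
      covariogram D (p.1 • (p.2 : E d))) := by
    refine (aux_cov_meas D hDmeas).comp_measurable ?_
    have : Continuous (fun p : ℝ × sphere (0 : E d) 1 => p.1 • (p.2 : E d)) := by fun_prop
    exact this.measurable
  exact h.integral_prod_right

theorem aux_iso_bdd {d : ℕ} (hd : 1 ≤ d) (D : Set (E d)) (hDmeas : MeasurableSet D)
    (hDbdd : Bornology.IsBounded D) (u : ℝ) : ‖isoCov D u‖ ≤ volume.real D := by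
  have := aux_prob hd
  have := norm_integral_le_of_norm_le_const (μ := sphereProb d) (C := volume.real D)
    (f := fun ξ : sphere (0 : E d) 1 => covariogram D (u • (ξ : E d)))
    (Eventually.of_forall fun ξ => aux_cov_bdd D hDmeas hDbdd _)
  simpa [isoCov] using this

theorem aux_avg_meas {d : ℕ} (hd : 1 ≤ d) (D : Set (E d)) (hDmeas : MeasurableSet D)
    (hDbdd : Bornology.IsBounded D) :
    StronglyMeasurable (avgFT D) := by
  have := aux_prob hd
  have h : StronglyMeasurable (fun p : ℝ × sphere (0 : E d) 1 =>
      ‖𝓕 (indC D) (p.1 • (p.2 : E d))‖ ^ 2) := by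
    have h1 := aux_four_cont D hDmeas hDbdd
    have : Continuous (fun p : ℝ × sphere (0 : E d) 1 => ‖𝓕 (indC D) (p.1 • (p.2 : E d))‖ ^ 2) := by
      fun_prop
    exact this.stronglyMeasurable
  exact h.integral_prod_right

theorem aux_gauss_int {d : ℕ} (b : ℝ) (hb : 0 < b) :
    Integrable (fun v : E d => Real.exp (-(b * ‖v‖ ^ 2))) := by
  have hb' : 0 < (b : ℂ).re := hb
  have := (GaussianFourier.integrable_cexp_neg_mul_sq_norm_add hb' 0 (0 : E d)).norm
  refine this.congr (Eventually.of_forall fun v => ?_)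
  simp only [Complex.norm_exp]
  congr 1
  have : (-(b : ℂ) * (‖v‖ : ℂ) ^ 2 + 0 * ((⟪(0 : E d), v⟫ : ℝ) : ℂ)) = ((-(b * ‖v‖ ^ 2) : ℝ) : ℂ) := by
    push_cast; ring
  rw [this, Complex.ofReal_re]

theorem aux_gauss_int1 (n : ℕ) (b : ℝ) (hb : 0 < b) :
    IntegrableOn (fun s : ℝ => s ^ n * Real.exp (-(b * s ^ 2))) (Ioi 0) := by
  have := (integrable_rpow_mul_exp_neg_mul_sq hb (s := n) (by
    have : (0:ℝ) ≤ n := n.cast_nonneg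
    linarith)).integrableOn (s := Ioi 0)
  simpa using this

/-- The physical side. -/
theorem aux_right {d : ℕ} (hd : 1 ≤ d) (D : Set (E d)) (hDmeas : MeasurableSet D)
    (hDbdd : Bornology.IsBounded D) (ε : ℝ) (hε : 0 < ε) :
    ∫ x : E d, (ε⁻¹) ^ d * Real.exp (-(Real.pi * (ε⁻¹) ^ 2 * ‖x‖ ^ 2)) * covariogram D x =
    ((volume : Measure (E d)).toSphere Set.univ).toReal *
      ∫ s in Ioi (0:ℝ), s ^ (d - 1) * Real.exp (-(Real.pi * s ^ 2)) * isoCov D (ε * s) := by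
  have hi : Integrable (fun x : E d =>
      (ε⁻¹) ^ d * Real.exp (-(Real.pi * (ε⁻¹) ^ 2 * ‖x‖ ^ 2)) * covariogram D x) := by
    refine Integrable.mul_bdd (c := volume.real D) ?_ (aux_cov_meas D hDmeas).aestronglyMeasurable
      (Eventually.of_forall fun x => aux_cov_bdd D hDmeas hDbdd x)
    exact (aux_gauss_int _ (by have := Real.pi_pos; positivity)).const_mul _
  rw [aux_polar hd _ hi]
  congr 1
  have hsub := integral_comp_mul_left_Ioi (fun s : ℝ => s ^ (d - 1) *
    Real.exp (-(Real.pi * s ^ 2)) * isoCov D (ε * s)) 0 (b := ε⁻¹) (by positivity)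
  rw [mul_zero, inv_inv, smul_eq_mul] at hsub
  have h3 : ∫ s in Ioi (0:ℝ), s ^ (d - 1) * Real.exp (-(Real.pi * s ^ 2)) * isoCov D (ε * s)
      = ε⁻¹ * (ε * ∫ s in Ioi (0:ℝ), s ^ (d - 1) * Real.exp (-(Real.pi * s ^ 2)) *
        isoCov D (ε * s)) := by
    rw [← mul_assoc, inv_mul_cancel₀ hε.ne', one_mul]
  rw [h3, ← hsub, ← integral_const_mul]
  refine setIntegral_congr_fun measurableSet_Ioi fun r hr => ?_
  have hr' : 0 < r := hr
  have hn : ∀ ξ : sphere (0 : E d) 1, ‖r • (ξ : E d)‖ = r := fun ξ => by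
    rw [norm_smul, norm_eq_of_mem_sphere, Real.norm_of_nonneg hr'.le, mul_one]
  simp only [hn]
  rw [integral_const_mul]
  change _ * (_ * isoCov D r) = _
  have h4 : ε * (ε⁻¹ * r) = r := by field_simp
  rw [h4]
  obtain ⟨k, rfl⟩ : ∃ k, d = k + 1 := ⟨d - 1, by omega⟩
  simp only [Nat.add_sub_cancel, mul_pow, pow_succ]
  ring_nf

/-- The Fourier side. -/
theorem aux_left {d : ℕ} (hd : 1 ≤ d) (D : Set (E d)) (hDmeas : MeasurableSet D)
    (hDbdd : Bornology.IsBounded D) (ε : ℝ) (hε : 0 < ε) :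
    (∫ ξ : E d, Real.exp (-(Real.pi * ε ^ 2 * ‖ξ‖ ^ 2)) * ‖𝓕 (indC D) ξ‖ ^ 2) -
    (∫ ξ : E d, Real.exp (-(Real.pi * (2 * ε) ^ 2 * ‖ξ‖ ^ 2)) * ‖𝓕 (indC D) ξ‖ ^ 2) =
    ((volume : Measure (E d)).toSphere Set.univ).toReal *
      (ε * ∫ s in Ioi (0:ℝ), (ε⁻¹ * s) ^ (d + 1) * avgFT D (ε⁻¹ * s) *
        ((Real.exp (-(Real.pi * s ^ 2)) - Real.exp (-(4 * Real.pi * s ^ 2))) * (s ^ 2)⁻¹)) := by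
  have hi : ∀ ε : ℝ, 0 < ε → Integrable (fun ξ : E d =>
      Real.exp (-(Real.pi * ε ^ 2 * ‖ξ‖ ^ 2)) * ‖𝓕 (indC D) ξ‖ ^ 2) := by
    intro ε hε
    refine Integrable.mul_bdd (c := (∫ x, ‖indC D x‖) ^ 2) ?_ ?_
      (Eventually.of_forall fun x => ?_)
    · exact aux_gauss_int _ (by have := Real.pi_pos; positivity)
    · exact ((aux_four_cont D hDmeas hDbdd).norm.pow 2).aestronglyMeasurable
    · rw [norm_pow, norm_norm]
      exact pow_le_pow_left₀ (norm_nonneg _) (aux_four_bdd D x) 2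
  rw [← integral_sub (hi ε hε) (hi (2 * ε) (by positivity)),
    aux_polar hd (fun ξ => Real.exp (-(Real.pi * ε ^ 2 * ‖ξ‖ ^ 2)) * ‖𝓕 (indC D) ξ‖ ^ 2 -
      Real.exp (-(Real.pi * (2 * ε) ^ 2 * ‖ξ‖ ^ 2)) * ‖𝓕 (indC D) ξ‖ ^ 2)
      ((hi ε hε).sub (hi (2 * ε) (by positivity)))]
  congr 1
  have hsub := integral_comp_mul_left_Ioi (fun s : ℝ => (ε⁻¹ * s) ^ (d + 1) * avgFT D (ε⁻¹ * s) *
        ((Real.exp (-(Real.pi * s ^ 2)) - Real.exp (-(4 * Real.pi * s ^ 2))) * (s ^ 2)⁻¹)) 0 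
        (b := ε) hε
  rw [mul_zero, smul_eq_mul] at hsub
  have h3 : ∀ X : ℝ, ε * X = ε ^ 2 * (ε⁻¹ * X) := fun X => by field_simp
  rw [h3, ← hsub, ← integral_const_mul]
  refine setIntegral_congr_fun measurableSet_Ioi fun r hr => ?_
  have hr' : 0 < r := hr
  have hn : ∀ ξ : sphere (0 : E d) 1, ‖r • (ξ : E d)‖ = r := fun ξ => by
    rw [norm_smul, norm_eq_of_mem_sphere, Real.norm_of_nonneg hr'.le, mul_one]
  simp only [hn, ← sub_mul]
  rw [integral_const_mul]
  change _ * (_ * avgFT D r) = _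
  have h4 : ε⁻¹ * (ε * r) = r := by field_simp
  rw [h4]
  obtain ⟨k, rfl⟩ : ∃ k, d = k + 1 := ⟨d - 1, by omega⟩
  have e1 : Real.pi * (ε * r) ^ 2 = Real.pi * ε ^ 2 * r ^ 2 := by ring
  have e2 : 4 * Real.pi * (ε * r) ^ 2 = Real.pi * (2 * ε) ^ 2 * r ^ 2 := by ring
  rw [e1, e2, Nat.add_sub_cancel]
  field_simp
  ring
theorem aux_K_nonneg (s : ℝ) :
    0 ≤ (Real.exp (-(Real.pi * s ^ 2)) - Real.exp (-(4 * Real.pi * s ^ 2))) * (s ^ 2)⁻¹ := by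
  have := Real.pi_pos
  have h : Real.exp (-(4 * Real.pi * s ^ 2)) ≤ Real.exp (-(Real.pi * s ^ 2)) := by
    apply Real.exp_le_exp.2
    nlinarith [mul_nonneg this.le (sq_nonneg s)]
  exact mul_nonneg (by linarith) (by positivity)

theorem aux_u_le (s : ℝ) :
    Real.exp (-(Real.pi * s ^ 2)) - Real.exp (-(4 * Real.pi * s ^ 2)) ≤
      3 * Real.pi * s ^ 2 * Real.exp (-(Real.pi * s ^ 2)) := by
  have h : Real.exp (-(4 * Real.pi * s ^ 2)) =
      Real.exp (-(Real.pi * s ^ 2)) * Real.exp (-(3 * Real.pi * s ^ 2)) := by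
    rw [← Real.exp_add]; congr 1; ring
  have h2 := Real.add_one_le_exp (-(3 * Real.pi * s ^ 2))
  rw [h]
  nlinarith [Real.exp_pos (-(Real.pi * s ^ 2))]

theorem aux_K_le (s : ℝ) :
    (Real.exp (-(Real.pi * s ^ 2)) - Real.exp (-(4 * Real.pi * s ^ 2))) * (s ^ 2)⁻¹ ≤
      3 * Real.pi * Real.exp (-(Real.pi * s ^ 2)) := by
  have hpi := Real.pi_pos
  rcases eq_or_ne s 0 with rfl | hs
  · simp; positivity
  · have hs2 : 0 < s ^ 2 := by positivity
    rw [← div_eq_mul_inv, div_le_iff₀ hs2]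
    have := aux_u_le s
    linarith

theorem aux_K_int : IntegrableOn (fun s : ℝ =>
    (Real.exp (-(Real.pi * s ^ 2)) - Real.exp (-(4 * Real.pi * s ^ 2))) * (s ^ 2)⁻¹) (Ioi 0) := by
  have h := (aux_gauss_int1 0 Real.pi Real.pi_pos).const_mul (3 * Real.pi)
  refine Integrable.mono' h ?_ (Eventually.of_forall fun s => ?_)
  · apply Measurable.aestronglyMeasurable
    fun_prop
  · rw [Real.norm_of_nonneg (aux_K_nonneg s), pow_zero, one_mul]
    exact aux_K_le s

theorem aux_K_integral : ∫ s in Ioi (0:ℝ),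
    (Real.exp (-(Real.pi * s ^ 2)) - Real.exp (-(4 * Real.pi * s ^ 2))) * (s ^ 2)⁻¹ = Real.pi := by
  have hpi := Real.pi_pos
  have hg1 : IntegrableOn (fun s : ℝ => 2 * Real.pi * Real.exp (-Real.pi * s ^ 2)) (Ioi 0) :=
    ((integrable_exp_neg_mul_sq hpi).const_mul _).integrableOn
  have hg2 : IntegrableOn (fun s : ℝ => 8 * Real.pi * Real.exp (-(4 * Real.pi) * s ^ 2)) (Ioi 0) :=
    ((integrable_exp_neg_mul_sq (b := 4 * Real.pi) (by positivity)).const_mul _).integrableOn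
  have hu'v : ∀ x ∈ Ioi (0:ℝ), 
      (Real.exp (-(Real.pi * x ^ 2)) * (-(Real.pi * (2 * x))) -
        Real.exp (-(4 * Real.pi * x ^ 2)) * (-(4 * Real.pi * (2 * x)))) * (-x⁻¹) = 
      2 * Real.pi * Real.exp (-Real.pi * x ^ 2) - 8 * Real.pi * Real.exp (-(4 * Real.pi) * x ^ 2) := by
    intro x hx
    have hx' : x ≠ 0 := ne_of_gt hx
    rw [neg_mul, neg_mul]
    field_simp
    ring
  have key := integral_Ioi_mul_deriv_eq_deriv_mul (a := (0:ℝ)) (a' := (0:ℝ)) (b' := (0:ℝ))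
    (u := fun s : ℝ => Real.exp (-(Real.pi * s ^ 2)) - Real.exp (-(4 * Real.pi * s ^ 2)))
    (v := fun s : ℝ => -s⁻¹)
    (u' := fun x : ℝ => Real.exp (-(Real.pi * x ^ 2)) * (-(Real.pi * (2 * x))) -
        Real.exp (-(4 * Real.pi * x ^ 2)) * (-(4 * Real.pi * (2 * x))))
    (v' := fun s : ℝ => (s ^ 2)⁻¹)
    (by
      intro x hx
      have h2 : HasDerivAt (fun s : ℝ => s ^ 2) (2 * x) x := by
        simpa using hasDerivAt_pow 2 x
      exact ((h2.const_mul Real.pi).neg.exp).sub ((h2.const_mul (4 * Real.pi)).neg.exp))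
    (by
      intro x hx
      have := (hasDerivAt_inv (𝕜 := ℝ) (x := x) (ne_of_gt hx)).fun_neg
      simpa using this)
    aux_K_int
    ((hg1.sub hg2).congr_fun (fun x hx => (hu'v x hx).symm) measurableSet_Ioi)
    (by
      have hz : Tendsto (fun s : ℝ => 3 * Real.pi * s) (𝓝[>] 0) (𝓝 0) := by
        have : Tendsto (fun s : ℝ => 3 * Real.pi * s) (𝓝 0) (𝓝 (3 * Real.pi * 0)) := by
          apply Continuous.tendsto; fun_prop
        rw [mul_zero] at this
        exact this.mono_left nhdsWithin_le_nhds
      refine squeeze_zero_norm' ?_ hz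
      filter_upwards [self_mem_nhdsWithin] with s hs
      have hs' : 0 < s := hs
      have h1 := aux_K_nonneg s
      have h2 := aux_K_le s
      have h3 : Real.exp (-(Real.pi * s ^ 2)) ≤ 1 := by
        rw [Real.exp_le_one_iff]; have := mul_pos hpi (pow_pos hs' 2); linarith
      have h4 : ((fun s : ℝ => Real.exp (-(Real.pi * s ^ 2)) - Real.exp (-(4 * Real.pi * s ^ 2))) *
        (fun s : ℝ => -s⁻¹)) s = 
        -(((Real.exp (-(Real.pi * s ^ 2)) - Real.exp (-(4 * Real.pi * s ^ 2))) * (s ^ 2)⁻¹) * s) := by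
        simp only [Pi.mul_apply]
        field_simp
      rw [h4, norm_neg, Real.norm_of_nonneg (mul_nonneg h1 hs'.le)]
      refine mul_le_mul_of_nonneg_right (h2.trans ?_) hs'.le
      nlinarith)
    (by
      refine squeeze_zero_norm' ?_ tendsto_inv_atTop_zero
      filter_upwards [eventually_gt_atTop 0] with s hs
      have h1 : Real.exp (-(Real.pi * s ^ 2)) ≤ 1 := by
        rw [Real.exp_le_one_iff]; have := mul_pos hpi (pow_pos hs 2); linarith
      have h2 : Real.exp (-(4 * Real.pi * s ^ 2)) ≤ 1 := by
        rw [Real.exp_le_one_iff]; have := mul_pos hpi (pow_pos hs 2); linarith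
      simp only [Pi.mul_apply]
      rw [norm_mul, norm_neg, norm_inv, Real.norm_of_nonneg hs.le]
      refine mul_le_of_le_one_left (by positivity) ?_
      rw [Real.norm_eq_abs, abs_le]
      constructor <;> linarith [Real.exp_pos (-(Real.pi * s ^ 2)), Real.exp_pos (-(4 * Real.pi * s ^ 2))])
  rw [key, setIntegral_congr_fun measurableSet_Ioi hu'v, integral_sub hg1 hg2, integral_const_mul,
    integral_const_mul, integral_gaussian_Ioi, integral_gaussian_Ioi]
  have e1 : Real.sqrt (Real.pi / Real.pi) = 1 := by rw [div_self hpi.ne', Real.sqrt_one]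
  have e2 : Real.sqrt (Real.pi / (4 * Real.pi)) = 1 / 2 := by
    rw [show Real.pi / (4 * Real.pi) = (1 / 2) ^ 2 by field_simp; norm_num]
    exact Real.sqrt_sq (by norm_num)
  rw [e1, e2]
  ring

theorem aux_moment {d : ℕ} (hd : 1 ≤ d) :
    2 * Real.pi * unitBallVol (d - 1) * ∫ s in Ioi (0:ℝ), s ^ d * Real.exp (-(Real.pi * s ^ 2)) = 1 := by
  have hpi := Real.pi_pos
  have h := _root_.integral_rpow_mul_exp_neg_mul_rpow (p := 2) (q := d) (b := Real.pi) (by norm_num)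
    (by have : (0:ℝ) ≤ d := d.cast_nonneg
        linarith) hpi
  have h' : ∫ s in Ioi (0:ℝ), s ^ d * Real.exp (-(Real.pi * s ^ 2)) =
     Real.pi ^ (-((d:ℝ) + 1) / 2) * (1 / 2) * Real.Gamma (((d:ℝ) + 1) / 2) := by
    rw [← h]
    refine setIntegral_congr_fun measurableSet_Ioi fun x hx => ?_
    simp
  rw [h', unitBallVol, Nat.cast_sub hd, Nat.cast_one]
  have hG : Real.Gamma (((d:ℝ) + 1) / 2) ≠ 0 := (Real.Gamma_pos_of_pos (by positivity)).ne'
  have e : ((d:ℝ) - 1) / 2 + 1 = ((d:ℝ) + 1) / 2 := by ring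
  rw [e]
  have hp : Real.pi ^ (((d:ℝ) - 1) / 2) * Real.pi ^ (-((d:ℝ) + 1) / 2) = Real.pi⁻¹ := by
    rw [← Real.rpow_add hpi, ← Real.rpow_neg_one]
    congr 1
    ring
  calc _ = Real.pi * (Real.pi ^ (((d:ℝ) - 1) / 2) * Real.pi ^ (-((d:ℝ) + 1) / 2)) *
      (Real.Gamma (((d:ℝ) + 1) / 2) / Real.Gamma (((d:ℝ) + 1) / 2)) := by ring
    _ = 1 := by rw [hp, div_self hG, mul_inv_cancel₀ hpi.ne', one_mul]

theorem aux_limA {d : ℕ} (hd : 1 ≤ d) (D : Set (E d))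
    (hDmeas : MeasurableSet D) (hDbdd : Bornology.IsBounded D)
    (hbdd : ∃ C : ℝ, ∀ ρ : ℝ, 0 < ρ → |ρ ^ (d + 1) * avgFT D ρ| ≤ C)
    (c : ℝ) (hc : Tendsto (fun ρ : ℝ => ρ ^ (d + 1) * avgFT D ρ) atTop (𝓝 c)) :
    Tendsto (fun ε : ℝ => ∫ s in Ioi (0:ℝ), (ε⁻¹ * s) ^ (d + 1) * avgFT D (ε⁻¹ * s) *
        ((Real.exp (-(Real.pi * s ^ 2)) - Real.exp (-(4 * Real.pi * s ^ 2))) * (s ^ 2)⁻¹))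
      (𝓝[>] 0) (𝓝 (c * Real.pi)) := by
  obtain ⟨C, hC⟩ := hbdd
  have e : c * Real.pi = ∫ s in Ioi (0:ℝ), c *
      ((Real.exp (-(Real.pi * s ^ 2)) - Real.exp (-(4 * Real.pi * s ^ 2))) * (s ^ 2)⁻¹) := by
    rw [integral_const_mul, aux_K_integral]
  rw [e]
  refine tendsto_integral_filter_of_dominated_convergence (fun s : ℝ => C *
    ((Real.exp (-(Real.pi * s ^ 2)) - Real.exp (-(4 * Real.pi * s ^ 2))) * (s ^ 2)⁻¹)) ?_ ?_
    (aux_K_int.const_mul C) ?_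
  · refine Eventually.of_forall fun ε => Measurable.aestronglyMeasurable ?_
    have := (aux_avg_meas hd D hDmeas hDbdd).measurable
    fun_prop
  · filter_upwards [self_mem_nhdsWithin] with ε hε
    have hε' : 0 < ε := hε
    filter_upwards [ae_restrict_mem measurableSet_Ioi] with s hs
    have hs' : 0 < s := hs
    rw [norm_mul, Real.norm_of_nonneg (aux_K_nonneg s)]
    exact mul_le_mul_of_nonneg_right (hC _ (by positivity)) (aux_K_nonneg s)
  · filter_upwards [ae_restrict_mem measurableSet_Ioi] with s hs
    have hs' : 0 < s := hs
    refine Tendsto.mul_const _ ?_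
    exact hc.comp (tendsto_inv_nhdsGT_zero.atTop_mul_const hs')

theorem aux_lip {d : ℕ} (hd : 1 ≤ d) (D : Set (E d))
    (hDmeas : MeasurableSet D) (hDbdd : Bornology.IsBounded D) (γ' : ℝ)
    (hderiv : Tendsto (fun h : ℝ => (isoCov D h - isoCov D 0) / h) (𝓝[>] (0 : ℝ)) (𝓝 γ')) :
    ∃ K : ℝ, 0 ≤ K ∧ ∀ h : ℝ, 0 < h → |isoCov D h - isoCov D 0| ≤ K * h := by
  have h1 : ∀ᶠ h in 𝓝[>] (0:ℝ), |(isoCov D h - isoCov D 0) / h| < |γ'| + 1 :=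
    hderiv.abs.eventually_lt_const (by linarith)
  obtain ⟨δ, hδ, hδ2⟩ := (mem_nhdsGT_iff_exists_Ioo_subset).1 h1
  have hδ' : 0 < δ := hδ
  set V := volume.real D with hV
  have hV0 : 0 ≤ V := measureReal_nonneg
  refine ⟨|γ'| + 1 + 2 * V / δ, by positivity, fun h hh => ?_⟩
  rcases lt_or_ge h δ with hlt | hge
  · have := hδ2 ⟨hh, hlt⟩
    simp only [Set.mem_ofPred_eq, abs_div, abs_of_pos hh] at this
    rw [div_lt_iff₀ hh] at this
    have h3 : 0 ≤ 2 * V / δ * h := by positivity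
    linarith
  · have e1 := aux_iso_bdd hd D hDmeas hDbdd h
    have e2 := aux_iso_bdd hd D hDmeas hDbdd 0
    rw [Real.norm_eq_abs] at e1 e2
    have e3 := abs_sub (isoCov D h) (isoCov D 0)
    have e4 : 2 * V ≤ 2 * V / δ * h := by
      rw [div_mul_eq_mul_div, le_div_iff₀ hδ']
      exact mul_le_mul_of_nonneg_left hge (by positivity)
    have e5 : 0 ≤ (|γ'| + 1) * h := by positivity
    linarith

theorem aux_limB {d : ℕ} (hd : 1 ≤ d) (D : Set (E d))
    (hDmeas : MeasurableSet D) (hDbdd : Bornology.IsBounded D) (γ' : ℝ)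
    (hderiv : Tendsto (fun h : ℝ => (isoCov D h - isoCov D 0) / h) (𝓝[>] (0 : ℝ)) (𝓝 γ')) :
    Tendsto (fun ε : ℝ => ∫ s in Ioi (0:ℝ), s ^ (d - 1) * Real.exp (-(Real.pi * s ^ 2)) *
       (ε⁻¹ * (isoCov D (ε * s) - isoCov D (2 * ε * s))))
      (𝓝[>] 0) (𝓝 (-γ' * ∫ s in Ioi (0:ℝ), s ^ d * Real.exp (-(Real.pi * s ^ 2)))) := by
  obtain ⟨K, hK0, hK⟩ := aux_lip hd D hDmeas hDbdd γ' hderiv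
  rw [← integral_const_mul]
  have hpow : ∀ s : ℝ, s ^ d = s ^ (d - 1) * s := fun s => by
    rw [← pow_succ, Nat.sub_add_cancel hd]
  refine tendsto_integral_filter_of_dominated_convergence (fun s : ℝ => (3 * K) *
    (s ^ d * Real.exp (-(Real.pi * s ^ 2)))) ?_ ?_
    ((aux_gauss_int1 d Real.pi Real.pi_pos).const_mul (3 * K)) ?_
  · refine Eventually.of_forall fun ε => Measurable.aestronglyMeasurable ?_
    have := (aux_iso_meas hd D hDmeas).measurable
    fun_prop
  · filter_upwards [self_mem_nhdsWithin] with ε hε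
    have hε' : 0 < ε := hε
    filter_upwards [ae_restrict_mem measurableSet_Ioi] with s hs
    have hs' : 0 < s := hs
    have hw : 0 ≤ s ^ (d - 1) * Real.exp (-(Real.pi * s ^ 2)) := by positivity
    have h1 := hK (ε * s) (by positivity)
    have h2 := hK (2 * ε * s) (by positivity)
    have h3 : |ε⁻¹ * (isoCov D (ε * s) - isoCov D (2 * ε * s))| ≤ 3 * K * s := by
      rw [abs_mul, abs_of_pos (inv_pos.2 hε'), inv_mul_le_iff₀ hε']
      have := abs_sub_le (isoCov D (ε * s)) (isoCov D 0) (isoCov D (2 * ε * s))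
      rw [abs_sub_comm (isoCov D 0)] at this
      linarith
    rw [norm_mul, Real.norm_of_nonneg hw, Real.norm_eq_abs, hpow]
    calc _ ≤ s ^ (d - 1) * Real.exp (-(Real.pi * s ^ 2)) * (3 * K * s) :=
          mul_le_mul_of_nonneg_left h3 hw
      _ = _ := by ring
  · filter_upwards [ae_restrict_mem measurableSet_Ioi] with s hs
    have hs' : 0 < s := hs
    have hm : ∀ a : ℝ, 0 < a → Tendsto (fun ε : ℝ => ε * a) (𝓝[>] 0) (𝓝[>] 0) := by
      intro a ha
      refine tendsto_nhdsWithin_iff.2 ⟨?_, ?_⟩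
      · have : Tendsto (fun ε : ℝ => ε * a) (𝓝 0) (𝓝 (0 * a)) := by
          apply Continuous.tendsto; fun_prop
        rw [zero_mul] at this
        exact this.mono_left nhdsWithin_le_nhds
      · filter_upwards [self_mem_nhdsWithin] with ε hε
        exact mul_pos hε ha
    have t1 := (hderiv.comp (hm s hs')).mul_const s
    have t2 := (hderiv.comp (hm (2 * s) (by positivity))).mul_const (2 * s)
    have t3 := (t1.sub t2).const_mul (s ^ (d - 1) * Real.exp (-(Real.pi * s ^ 2)))
    have e : s ^ (d - 1) * Real.exp (-(Real.pi * s ^ 2)) * (γ' * s - γ' * (2 * s)) =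
        -γ' * (s ^ d * Real.exp (-(Real.pi * s ^ 2))) := by rw [hpow]; ring
    rw [e] at t3
    refine t3.congr' ?_
    filter_upwards [self_mem_nhdsWithin] with ε hε
    have hε' : ε ≠ 0 := ne_of_gt hε
    have e2 : 2 * ε * s = ε * (2 * s) := by ring
    simp only [Function.comp_apply]
    rw [e2]
    congr 1
    field_simp
    ring

/-- if moreover `lim_{ρ→∞} ρ^{d+1} γ̄̂_D(ρ)` exists, then
`lim_{ρ→∞} 2π² κ_{d−1} ρ^{d+1} γ̄̂_D(ρ) = −γ̄_D'⁺(0)`. -/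
theorem limit_avgFT_tendsto (d : ℕ) (hd : 1 ≤ d) (D : Set (E d))
    (hDmeas : MeasurableSet D) (hDbdd : Bornology.IsBounded D) (γ' : ℝ)
    (hderiv : Tendsto (fun h : ℝ => (isoCov D h - isoCov D 0) / h) (𝓝[>] (0 : ℝ)) (𝓝 γ'))
    (hbdd : ∃ C : ℝ, ∀ ρ : ℝ, 0 < ρ → |ρ ^ (d + 1) * avgFT D ρ| ≤ C)
    (hlim : ∃ c : ℝ, Tendsto (fun ρ : ℝ => ρ ^ (d + 1) * avgFT D ρ) atTop (𝓝 c)) :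
    Tendsto (fun ρ : ℝ => 2 * Real.pi ^ 2 * unitBallVol (d - 1) * ρ ^ (d + 1) * avgFT D ρ)
      atTop (𝓝 (-γ')) := by
  have : Nonempty (Fin d) := ⟨⟨0, hd⟩⟩
  have : Nontrivial (E d) := inferInstance
  obtain ⟨c, hc⟩ := hlim
  have hA := aux_limA hd D hDmeas hDbdd hbdd c hc
  have hB := aux_limB hd D hDmeas hDbdd γ' hderiv
  have hS : ((volume : Measure (E d)).toSphere Set.univ).toReal ≠ 0 := by
    rw [ENNReal.toReal_ne_zero]
    refine ⟨?_, measure_ne_top _ _⟩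
    rw [Ne, Measure.measure_univ_eq_zero]; exact Measure.toSphere_ne_zero _
  have hi : ∀ ε : ℝ, Integrable (fun s : ℝ => s ^ (d - 1) * Real.exp (-(Real.pi * s ^ 2)) *
      isoCov D (ε * s)) (volume.restrict (Ioi 0)) := by
    intro ε
    refine Integrable.mul_bdd (c := volume.real D) (aux_gauss_int1 (d - 1) Real.pi Real.pi_pos) ?_
      (Eventually.of_forall fun x => aux_iso_bdd hd D hDmeas hDbdd _)
    have := (aux_iso_meas hd D hDmeas).measurable
    apply Measurable.aestronglyMeasurable
    fun_prop
  have hAB : ∀ ε : ℝ, 0 < ε →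
      ∫ s in Ioi (0:ℝ), (ε⁻¹ * s) ^ (d + 1) * avgFT D (ε⁻¹ * s) *
        ((Real.exp (-(Real.pi * s ^ 2)) - Real.exp (-(4 * Real.pi * s ^ 2))) * (s ^ 2)⁻¹) =
      ∫ s in Ioi (0:ℝ), s ^ (d - 1) * Real.exp (-(Real.pi * s ^ 2)) *
       (ε⁻¹ * (isoCov D (ε * s) - isoCov D (2 * ε * s))) := by
    intro ε hε
    have h2ε : 0 < 2 * ε := by positivity
    have hL := aux_left hd D hDmeas hDbdd ε hε
    rw [aux_pair D hDmeas hDbdd ε hε, aux_pair D hDmeas hDbdd (2 * ε) h2ε,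
      aux_right hd D hDmeas hDbdd ε hε, aux_right hd D hDmeas hDbdd (2 * ε) h2ε, ← mul_sub] at hL
    have hL2 := mul_left_cancel₀ hS hL
    rw [← integral_sub (hi ε) (hi (2 * ε))] at hL2
    apply mul_left_cancel₀ hε.ne'
    rw [← hL2, ← integral_const_mul]
    congr 1
    funext s
    field_simp
  have hA' := hA.congr' (by
    filter_upwards [self_mem_nhdsWithin] with ε hε
    exact hAB ε hε)
  have heq := tendsto_nhds_unique hA' hB
  have hm := aux_moment hd
  have hfin : 2 * Real.pi ^ 2 * unitBallVol (d - 1) * c = -γ' := by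
    calc _ = 2 * Real.pi * unitBallVol (d - 1) * (c * Real.pi) := by ring
      _ = -γ' * (2 * Real.pi * unitBallVol (d - 1) *
            ∫ s in Ioi (0:ℝ), s ^ d * Real.exp (-(Real.pi * s ^ 2))) := by rw [heq]; ring
      _ = -γ' := by rw [hm, mul_one]
  rw [← hfin]
  refine (hc.const_mul (2 * Real.pi ^ 2 * unitBallVol (d - 1))).congr fun ρ => ?_
  ring

end
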